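/- For n ≥ 1 define A_n : ℝ → ℝ by A_n(t) := Σ_{j=1}^n 2·(−1)^{j+1}·C(n+j−1, n−j)·((2j−1)!/((j−1)!·(j+1)!))·e^{−jt}. Then: (i) A_1(t) = e^{−t} for all t; (ii) A_n(0) = 0 for every n ≥ 2; and (iii) for every n ≥ 2 and every t ∈ ℝ, Ȧ_{n−1}(t) + Ȧ_n(t) = (n−1)·A_{n−1}(t) − n·A_n(t). -/

import Mathlib

open Finset

/-- The coefficient `a(n,j) = 2(-1)^{j+1} C(n+j-1, n-j) (2j-1)!/((j-1)!(j+1)!)`. -/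
noncomputable def koebeCoef (n j : ℕ) : ℝ :=
  2 * (-1 : ℝ) ^ (j + 1) * (Nat.choose (n + j - 1) (n - j)) *
    ((Nat.factorial (2 * j - 1) : ℝ) /
      ((Nat.factorial (j - 1) : ℝ) * (Nat.factorial (j + 1) : ℝ)))

/-- The coefficient function `A_n(t) = ∑_{j=1}^n a(n,j) e^{-jt}` of the Löwner chain
of the Koebe function. -/
noncomputable def koebeA (n : ℕ) (t : ℝ) : ℝ :=
  ∑ j ∈ Icc 1 n, koebeCoef n j * Real.exp (-(j : ℝ) * t)

/-!
Written with factorials, `a(n,j) = 2(-1)^{j+1} (n+j-1)! / ((n-j)! (j-1)! (j+1)!)`, so the ratios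
of neighbouring coefficients, in `n` and in `j`, are rational functions of `n` and `j`.

The recurrence in `j` makes `j ↦ (n² - j²) a(n,j)` a discrete primitive of `j ↦ (n² - 1) a(n,j)`;
it vanishes at `j = n`, hence `A_n(0) = 0` as soon as `n² ≠ 1`. The recurrence
`(n+1-j) a(n+1,j) = (n+j) a(n,j)` says that `(d/dt + (n+1)) A_{n+1} = (n - d/dt) A_n` coefficient
by coefficient: the operator on the left kills the top exponential `e^{-(n+1)t}`.
-/

section Coefficients

open scoped Nat

theorem cast_factorial_eq_mul_pred {R : Type*} [Semiring R] {m : ℕ} (hm : m ≠ 0) :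
    (m ! : R) = m * (m - 1)! := by
  rw [← Nat.mul_factorial_pred hm, Nat.cast_mul]

theorem koebeCoef_eq_factorial {n j : ℕ} (hj : 1 ≤ j) (hjn : j ≤ n) :
    koebeCoef n j = 2 * (-1) ^ (j + 1) * (n + j - 1)! / ((n - j)! * (j - 1)! * (j + 1)!) := by
  have hsub : n + j - 1 - (n - j) = 2 * j - 1 := by omega
  rw [koebeCoef, Nat.cast_choose ℝ (by omega), hsub]
  field_simp

theorem sub_mul_koebeCoef_succ_left {n j : ℕ} (hj : 1 ≤ j) (hjn : j ≤ n) :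
    ((n : ℝ) + 1 - j) * koebeCoef (n + 1) j = (n + j) * koebeCoef n j := by
  have hnum : ((n + j)! : ℝ) = (n + j) * (n + j - 1)! := by
    simpa using cast_factorial_eq_mul_pred (R := ℝ) (by omega : n + j ≠ 0)
  have hden : ((n - j + 1)! : ℝ) = (n + 1 - j) * (n - j)! := by
    rw [Nat.factorial_succ]
    push_cast [hjn]
    ring
  have hne : (n : ℝ) + 1 - j ≠ 0 := by
    have : (j : ℝ) ≤ n := by exact_mod_cast hjn
    linarith
  rw [koebeCoef_eq_factorial hj (by omega), koebeCoef_eq_factorial hj hjn,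
    Nat.add_right_comm, Nat.add_sub_cancel, Nat.sub_add_comm hjn, hnum, hden]
  field_simp

theorem mul_koebeCoef_succ_right {n j : ℕ} (hj : 1 ≤ j) (hjn : j < n) :
    (j : ℝ) * (j + 2) * koebeCoef n (j + 1) = -((n : ℝ) ^ 2 - j ^ 2) * koebeCoef n j := by
  have hnum : ((n + j)! : ℝ) = (n + j) * (n + j - 1)! := by
    simpa using cast_factorial_eq_mul_pred (R := ℝ) (by omega : n + j ≠ 0)
  have hsub : ((n - j)! : ℝ) = (n - j) * (n - (j + 1))! := by
    rw [cast_factorial_eq_mul_pred (Nat.sub_ne_zero_of_lt hjn), Nat.sub_sub, Nat.cast_sub hjn.le]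
  have hpred : (j ! : ℝ) = j * (j - 1)! := cast_factorial_eq_mul_pred (by omega)
  have hsucc : ((j + 1 + 1)! : ℝ) = (j + 2) * (j + 1)! := by
    rw [Nat.factorial_succ (j + 1)]
    push_cast
    ring
  have hj0 : (j : ℝ) ≠ 0 := by exact_mod_cast (by omega : j ≠ 0)
  have hne : (n : ℝ) - j ≠ 0 := sub_ne_zero.mpr (by exact_mod_cast hjn.ne')
  rw [koebeCoef_eq_factorial (by omega) (by omega : j + 1 ≤ n),
    koebeCoef_eq_factorial hj hjn.le, ← Nat.add_assoc, Nat.add_sub_cancel, Nat.add_sub_cancel,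
    hnum, hsub, hpred, hsucc]
  field_simp
  ring

theorem mul_sum_Icc_koebeCoef {n m : ℕ} (hm : 1 ≤ m) (hmn : m ≤ n) :
    ((n : ℝ) ^ 2 - 1) * ∑ j ∈ Icc 1 m, koebeCoef n j =
      ((n : ℝ) ^ 2 - m ^ 2) * koebeCoef n m := by
  induction m, hm using Nat.le_induction with
  | base => simp
  | succ m hm ih =>
    rw [sum_Icc_succ_top (by omega), mul_add, ih (by omega)]
    push_cast
    linear_combination mul_koebeCoef_succ_right hm hmn

theorem sum_Icc_koebeCoef_eq_zero {n : ℕ} (hn : 2 ≤ n) : ∑ j ∈ Icc 1 n, koebeCoef n j = 0 := by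
  have hn' : (2 : ℝ) ≤ n := by exact_mod_cast hn
  have hne : (n : ℝ) ^ 2 - 1 ≠ 0 := by nlinarith
  have hmul := mul_sum_Icc_koebeCoef (n := n) (by omega) le_rfl
  rw [sub_self, zero_mul] at hmul
  exact (mul_eq_zero.mp hmul).resolve_left hne

end Coefficients

theorem hasDerivAt_sum_mul_exp {ι : Type*} (s : Finset ι) (c r : ι → ℝ) (t : ℝ) :
    HasDerivAt (fun t ↦ ∑ i ∈ s, c i * Real.exp (r i * t))
      (∑ i ∈ s, r i * (c i * Real.exp (r i * t))) t := by
  refine HasDerivAt.fun_sum fun i _ ↦ ?_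
  exact ((hasDerivAt_const_mul (r i)).exp.const_mul (c i)).congr_deriv (by ring)

theorem koebeA_one (t : ℝ) : koebeA 1 t = Real.exp (-t) := by
  simp [koebeA, koebeCoef]

theorem koebeA_zero_right {n : ℕ} (hn : 2 ≤ n) : koebeA n 0 = 0 := by
  simpa [koebeA] using sum_Icc_koebeCoef_eq_zero hn

theorem deriv_koebeA_add_mul (n : ℕ) (c t : ℝ) :
    deriv (koebeA n) t + c * koebeA n t =
      ∑ j ∈ Icc 1 n, (c - j) * koebeCoef n j * Real.exp (-(j : ℝ) * t) := by
  have hderiv : deriv (koebeA n) t =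
      ∑ j ∈ Icc 1 n, -(j : ℝ) * (koebeCoef n j * Real.exp (-(j : ℝ) * t)) :=
    (hasDerivAt_sum_mul_exp (Icc 1 n) (koebeCoef n) (fun j ↦ -(j : ℝ)) t).deriv
  rw [hderiv, koebeA, mul_sum, ← sum_add_distrib]
  exact sum_congr rfl fun j _ ↦ by ring

theorem deriv_koebeA_succ_add_mul (n : ℕ) (t : ℝ) :
    deriv (koebeA (n + 1)) t + (n + 1) * koebeA (n + 1) t =
      n * koebeA n t - deriv (koebeA n) t := by
  calc deriv (koebeA (n + 1)) t + (n + 1) * koebeA (n + 1) t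
      = ∑ j ∈ Icc 1 n, ((n : ℝ) + 1 - j) * koebeCoef (n + 1) j * Real.exp (-(j : ℝ) * t) := by
        rw [deriv_koebeA_add_mul, sum_Icc_succ_top (by omega)]
        simp
    _ = ∑ j ∈ Icc 1 n, ((n : ℝ) + j) * koebeCoef n j * Real.exp (-(j : ℝ) * t) :=
        sum_congr rfl fun j hj ↦ by
          obtain ⟨hj, hjn⟩ := mem_Icc.mp hj
          rw [sub_mul_koebeCoef_succ_left hj hjn]
    _ = -(deriv (koebeA n) t + -n * koebeA n t) := by
        rw [deriv_koebeA_add_mul, ← sum_neg_distrib]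
        exact sum_congr rfl fun j _ ↦ by ring
    _ = n * koebeA n t - deriv (koebeA n) t := by ring

/-- The functions `A_n` satisfy `A_1(t) = e^{-t}`, `A_n(0) = 0` for `n ≥ 2`, and the
differential equations system
`Ȧ_{n-1}(t) + Ȧ_n(t) = (n-1)A_{n-1}(t) - n·A_n(t)` for `n ≥ 2`. -/
theorem koebeA_satisfies_system :
    (∀ t : ℝ, koebeA 1 t = Real.exp (-t)) ∧
    (∀ n : ℕ, 2 ≤ n → koebeA n 0 = 0) ∧
    (∀ n : ℕ, 2 ≤ n → ∀ t : ℝ,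
      deriv (koebeA (n - 1)) t + deriv (koebeA n) t =
        ((n : ℝ) - 1) * koebeA (n - 1) t - (n : ℝ) * koebeA n t) := by
  refine ⟨koebeA_one, fun n hn ↦ koebeA_zero_right hn, fun n hn t ↦ ?_⟩
  obtain ⟨m, rfl⟩ := Nat.exists_eq_add_of_le' (one_le_two.trans hn)
  rw [Nat.add_sub_cancel]
  push_cast
  linear_combination deriv_koebeA_succ_add_mul m t
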